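/- arXiv:2107.07454 — 5 statements merged into one kernel-verified Lean document; each statement's English description precedes it below -/
import Mathlib

section
/- Let Ω ⊆ ℝ² be open and let u, v, w : Ω → ℝ be three times continuously differentiable, satisfying at each point of Ω the three η²-effective inextensibility constraints u_x = −(1/2)w_x², v_y = −(1/2)w_y², and u_y + v_x = −w_x w_y. Then at every point of Ω one has w_xx·w_yy = (w_xy)²; i.e., the Gaussian-curvature-type expression w_xx w_yy − w_xy² of the transverse deflection vanishes identically. -/
/-- Partial derivative in the first (span-wise, `x`) variable. -/
noncomputable def pdx (f : ℝ → ℝ → ℝ) (x y : ℝ) : ℝ := deriv (fun x' => f x' y) x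

/-- Partial derivative in the second (chord-wise, `y`) variable. -/
noncomputable def pdy (f : ℝ → ℝ → ℝ) (x y : ℝ) : ℝ := deriv (fun y' => f x y') y

/-!
Differentiating the constraints eliminates the in-plane displacements: by symmetry of third
derivatives, the strains satisfy Saint-Venant's compatibility relation
`(u_x)_yy + (v_y)_xx = (u_y + v_x)_xy`. With the constraints inserted, the third derivatives of `w`
cancel, because `(w_x w_y)_xy - (w_x²)_yy / 2 - (w_y²)_xx / 2` equals the Hessian determinant
of `w`.
-/

open Filter Topology Function
open scoped ContDiff

section DirectionalDerivative

variable {𝕜 E F 𝔸 : Type*} [NontriviallyNormedField 𝕜] [NormedAddCommGroup E] [NormedSpace 𝕜 E]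
  [NormedAddCommGroup F] [NormedSpace 𝕜 F] [NormedRing 𝔸] [NormedAlgebra 𝕜 𝔸]

variable (𝕜) in
/-- The derivative `∂ᵥ f` of `f` in the direction `v`. This is `lineDeriv` with the base point as
its last argument, so that directional derivatives can be iterated. -/
noncomputable def dirDeriv (v : E) (f : E → F) (x : E) : F := lineDeriv 𝕜 f x v

local notation:max "∂[" v "]" => dirDeriv 𝕜 v

theorem dirDeriv_eq_fderiv {f : E → F} {x : E} (hf : DifferentiableAt 𝕜 f x) (v : E) :
    ∂[v] f x = fderiv 𝕜 f x v :=
  hf.lineDeriv_eq_fderiv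

theorem dirDeriv_congr {f g : E → F} {x : E} (h : f =ᶠ[𝓝 x] g) (v : E) : ∂[v] f x = ∂[v] g x :=
  h.lineDeriv_eq

theorem eventuallyEq_dirDeriv {f g : E → F} {x : E} (h : f =ᶠ[𝓝 x] g) (v : E) :
    ∂[v] f =ᶠ[𝓝 x] ∂[v] g :=
  h.eventuallyEq_nhds.mono fun _ hy => dirDeriv_congr hy v

theorem dirDeriv_dirDeriv_congr {f g : E → F} {x : E} (h : f =ᶠ[𝓝 x] g) (v₁ v₂ : E) :
    ∂[v₁] (∂[v₂] f) x = ∂[v₁] (∂[v₂] g) x :=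
  dirDeriv_congr (eventuallyEq_dirDeriv h v₂) v₁

theorem dirDeriv_add {f g : E → F} {x : E} (hf : DifferentiableAt 𝕜 f x)
    (hg : DifferentiableAt 𝕜 g x) (v : E) : ∂[v] (f + g) x = ∂[v] f x + ∂[v] g x := by
  simp [dirDeriv_eq_fderiv, hf, hg, hf.add hg, fderiv_add]

theorem dirDeriv_const_smul (c : 𝕜) (f : E → F) (v : E) : ∂[v] (c • f) = c • ∂[v] f :=
  funext fun x => deriv_const_smul_field c fun t => f (x + t • v)

theorem dirDeriv_mul {f g : E → 𝔸} {x : E} (hf : DifferentiableAt 𝕜 f x)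
    (hg : DifferentiableAt 𝕜 g x) (v : E) :
    ∂[v] (f * g) x = ∂[v] f x * g x + f x * ∂[v] g x := by
  simp [dirDeriv_eq_fderiv, hf, hg, hf.mul hg, fderiv_mul', add_comm]

theorem eventually_differentiableAt {n : ℕ∞ω} {f : E → F} {x : E} (hf : ContDiffAt 𝕜 n f x)
    (hn : 1 ≤ n) : ∀ᶠ y in 𝓝 x, DifferentiableAt 𝕜 f y :=
  ((hf.of_le hn).eventually (by simp)).mono fun _ hy => hy.differentiableAt one_ne_zero

theorem dirDeriv_eventuallyEq_fderiv {n : ℕ∞ω} {f : E → F} {x : E} (hf : ContDiffAt 𝕜 n f x)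
    (hn : 1 ≤ n) (v : E) : ∂[v] f =ᶠ[𝓝 x] fun y => fderiv 𝕜 f y v :=
  (eventually_differentiableAt hf hn).mono fun _ hy => dirDeriv_eq_fderiv hy v

theorem contDiffAt_dirDeriv {m n : ℕ∞ω} {f : E → F} {x : E} (hf : ContDiffAt 𝕜 n f x)
    (hmn : m + 1 ≤ n) (v : E) : ContDiffAt 𝕜 m (∂[v] f) x :=
  ((hf.fderiv_right hmn).clm_apply contDiffAt_const).congr_of_eventuallyEq
    (dirDeriv_eventuallyEq_fderiv hf (le_add_self.trans hmn) v)

theorem differentiableAt_dirDeriv {f : E → F} {x : E} (hf : ContDiffAt 𝕜 2 f x) (v : E) :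
    DifferentiableAt 𝕜 (∂[v] f) x :=
  (contDiffAt_dirDeriv hf one_add_one_eq_two.le v).differentiableAt one_ne_zero

theorem dirDeriv_dirDeriv_eq_fderiv_fderiv {f : E → F} {x : E} (hf : ContDiffAt 𝕜 2 f x)
    (v₁ v₂ : E) : ∂[v₁] (∂[v₂] f) x = fderiv 𝕜 (fderiv 𝕜 f) x v₁ v₂ := by
  have hfd : DifferentiableAt 𝕜 (fderiv 𝕜 f) x :=
    (hf.fderiv_right one_add_one_eq_two.le).differentiableAt one_ne_zero
  rw [dirDeriv_eq_fderiv (differentiableAt_dirDeriv hf v₂),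
    (dirDeriv_eventuallyEq_fderiv hf one_le_two v₂).fderiv_eq,
    fderiv_clm_apply hfd (differentiableAt_const v₂)]
  simp

theorem dirDeriv_dirDeriv_add {f g : E → F} {x : E} (hf : ContDiffAt 𝕜 2 f x)
    (hg : ContDiffAt 𝕜 2 g x) (v₁ v₂ : E) :
    ∂[v₁] (∂[v₂] (f + g)) x = ∂[v₁] (∂[v₂] f) x + ∂[v₁] (∂[v₂] g) x := by
  have hsum : ∂[v₂] (f + g) =ᶠ[𝓝 x] ∂[v₂] f + ∂[v₂] g := by
    filter_upwards [eventually_differentiableAt hf one_le_two,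
      eventually_differentiableAt hg one_le_two] with y hfy hgy
    exact dirDeriv_add hfy hgy v₂
  rw [dirDeriv_congr hsum v₁,
    dirDeriv_add (differentiableAt_dirDeriv hf v₂) (differentiableAt_dirDeriv hg v₂)]

theorem dirDeriv_dirDeriv_mul {f g : E → 𝔸} {x : E} (hf : ContDiffAt 𝕜 2 f x)
    (hg : ContDiffAt 𝕜 2 g x) (v₁ v₂ : E) :
    ∂[v₁] (∂[v₂] (f * g)) x =
      ∂[v₁] (∂[v₂] f) x * g x + ∂[v₂] f x * ∂[v₁] g x +
        (∂[v₁] f x * ∂[v₂] g x + f x * ∂[v₁] (∂[v₂] g) x) := by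
  have hprod : ∂[v₂] (f * g) =ᶠ[𝓝 x] ∂[v₂] f * g + f * ∂[v₂] g := by
    filter_upwards [eventually_differentiableAt hf one_le_two,
      eventually_differentiableAt hg one_le_two] with y hfy hgy
    exact dirDeriv_mul hfy hgy v₂
  have hf₀ := hf.differentiableAt two_ne_zero
  have hg₀ := hg.differentiableAt two_ne_zero
  have hf₁ := differentiableAt_dirDeriv hf v₂
  have hg₁ := differentiableAt_dirDeriv hg v₂
  rw [dirDeriv_congr hprod v₁, dirDeriv_add (hf₁.mul hg₀) (hf₀.mul hg₁),
    dirDeriv_mul hf₁ hg₀, dirDeriv_mul hf₀ hg₁]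

end DirectionalDerivative

section Compatibility

variable {𝕜 E F : Type*} [RCLike 𝕜] [NormedAddCommGroup E] [NormedSpace 𝕜 E]
  [NormedAddCommGroup F] [NormedSpace 𝕜 F]

local notation:max "∂[" v "]" => dirDeriv 𝕜 v

theorem dirDeriv_comm {f : E → F} {x : E} (hf : ContDiffAt 𝕜 2 f x) (v₁ v₂ : E) :
    ∂[v₁] (∂[v₂] f) x = ∂[v₂] (∂[v₁] f) x := by
  have hsymm : IsSymmSndFDerivAt 𝕜 f x := hf.isSymmSndFDerivAt (by simp)
  rw [dirDeriv_dirDeriv_eq_fderiv_fderiv hf, dirDeriv_dirDeriv_eq_fderiv_fderiv hf, hsymm.eq]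

theorem dirDeriv_comm_eventuallyEq {f : E → F} {x : E} (hf : ContDiffAt 𝕜 2 f x) (v₁ v₂ : E) :
    ∂[v₁] (∂[v₂] f) =ᶠ[𝓝 x] ∂[v₂] (∂[v₁] f) :=
  (hf.eventually (by simp)).mono fun _ hy => dirDeriv_comm hy v₁ v₂

theorem saintVenant_compatibility {u v : E → F} {x : E} (hu : ContDiffAt 𝕜 3 u x)
    (hv : ContDiffAt 𝕜 3 v x) (a b : E) :
    ∂[b] (∂[b] (∂[a] u)) x + ∂[a] (∂[a] (∂[b] v)) x = ∂[b] (∂[a] (∂[b] u + ∂[a] v)) x := by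
  have hu₂ : ContDiffAt 𝕜 2 u x := hu.of_le (by norm_num)
  have hv₂ : ContDiffAt 𝕜 2 v x := hv.of_le (by norm_num)
  have hub : ContDiffAt 𝕜 2 (∂[b] u) x := contDiffAt_dirDeriv hu (by norm_num) b
  have hva : ContDiffAt 𝕜 2 (∂[a] v) x := contDiffAt_dirDeriv hv (by norm_num) a
  rw [dirDeriv_dirDeriv_add hub hva, dirDeriv_comm hva b a,
    dirDeriv_congr (dirDeriv_comm_eventuallyEq hu₂ b a) b,
    dirDeriv_congr (dirDeriv_comm_eventuallyEq hv₂ a b) a]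

theorem hessian_det_eq_dirDeriv_dirDeriv {w : E → 𝕜} {x : E} (hw : ContDiffAt 𝕜 3 w x)
    (a b : E) :
    ∂[a] (∂[a] w) x * ∂[b] (∂[b] w) x - ∂[b] (∂[a] w) x ^ 2 =
      ∂[b] (∂[a] (∂[a] w * ∂[b] w)) x
        - 1 / 2 * ∂[b] (∂[b] (∂[a] w ^ 2)) x - 1 / 2 * ∂[a] (∂[a] (∂[b] w ^ 2)) x := by
  have hw₂ : ContDiffAt 𝕜 2 w x := hw.of_le (by norm_num)
  have hwa : ContDiffAt 𝕜 2 (∂[a] w) x := contDiffAt_dirDeriv hw (by norm_num) a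
  have hwb : ContDiffAt 𝕜 2 (∂[b] w) x := contDiffAt_dirDeriv hw (by norm_num) b
  have hab : ∂[a] (∂[b] w) =ᶠ[𝓝 x] ∂[b] (∂[a] w) := dirDeriv_comm_eventuallyEq hw₂ a b
  have hbab : ∂[b] (∂[a] (∂[b] w)) x = ∂[b] (∂[b] (∂[a] w)) x :=
    dirDeriv_congr hab b
  have haab : ∂[a] (∂[a] (∂[b] w)) x = ∂[b] (∂[a] (∂[a] w)) x :=
    (dirDeriv_congr hab a).trans (dirDeriv_comm hwa a b)
  rw [pow_two (∂[a] w), pow_two (∂[b] w), dirDeriv_dirDeriv_mul hwa hwb,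
    dirDeriv_dirDeriv_mul hwa hwa, dirDeriv_dirDeriv_mul hwb hwb, hbab, haab, hab.eq_of_nhds]
  ring

theorem gaussian_curvature_vanishes_general {u v w : E → 𝕜} {x : E} (a b : E)
    (hu : ContDiffAt 𝕜 3 u x) (hv : ContDiffAt 𝕜 3 v x) (hw : ContDiffAt 𝕜 3 w x)
    (hc1 : ∀ᶠ y in 𝓝 x, ∂[a] u y = -(1 / 2) * ∂[a] w y ^ 2)
    (hc2 : ∀ᶠ y in 𝓝 x, ∂[b] v y = -(1 / 2) * ∂[b] w y ^ 2)
    (hc3 : ∀ᶠ y in 𝓝 x, ∂[b] u y + ∂[a] v y = -∂[a] w y * ∂[b] w y) :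
    ∂[a] (∂[a] w) x * ∂[b] (∂[b] w) x = ∂[b] (∂[a] w) x ^ 2 := by
  have haa : ∂[a] u =ᶠ[𝓝 x] (-(1 / 2) : 𝕜) • ∂[a] w ^ 2 := hc1
  have hbb : ∂[b] v =ᶠ[𝓝 x] (-(1 / 2) : 𝕜) • ∂[b] w ^ 2 := hc2
  have hab : ∂[b] u + ∂[a] v =ᶠ[𝓝 x] (-1 : 𝕜) • (∂[a] w * ∂[b] w) :=
    hc3.mono fun y hy => by simpa using hy
  have hcompat := saintVenant_compatibility hu hv a b
  simp only [dirDeriv_dirDeriv_congr haa, dirDeriv_dirDeriv_congr hbb, dirDeriv_dirDeriv_congr hab,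
    dirDeriv_const_smul, Pi.smul_apply, smul_eq_mul] at hcompat
  linear_combination hessian_det_eq_dirDeriv_dirDeriv hw a b + hcompat

end Compatibility

theorem pdx_eq_dirDeriv (f : ℝ → ℝ → ℝ) (x y : ℝ) :
    pdx f x y = dirDeriv ℝ (1, 0) (uncurry f) (x, y) := by
  simpa [pdx, dirDeriv, lineDeriv] using (deriv_comp_const_add (fun t => f t y) x 0).symm

theorem pdy_eq_dirDeriv (f : ℝ → ℝ → ℝ) (x y : ℝ) :
    pdy f x y = dirDeriv ℝ (0, 1) (uncurry f) (x, y) := by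
  simpa [pdy, dirDeriv, lineDeriv] using (deriv_comp_const_add (fun t => f x t) y 0).symm

theorem uncurry_pdx (f : ℝ → ℝ → ℝ) : uncurry (pdx f) = dirDeriv ℝ (1, 0) (uncurry f) :=
  funext fun p => pdx_eq_dirDeriv f p.1 p.2

theorem uncurry_pdy (f : ℝ → ℝ → ℝ) : uncurry (pdy f) = dirDeriv ℝ (0, 1) (uncurry f) :=
  funext fun p => pdy_eq_dirDeriv f p.1 p.2

/-- The three η²-effective inextensibility constraints force the
Gaussian-curvature-type quantity of the transverse deflection to vanish:
`wₓₓ w_yy = (wₓ_y)²`. -/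
theorem gaussian_curvature_vanishes
    (Ω : Set (ℝ × ℝ)) (hΩ : IsOpen Ω) (u v w : ℝ → ℝ → ℝ)
    (hu : ContDiffOn ℝ 3 (fun q : ℝ × ℝ => u q.1 q.2) Ω)
    (hv : ContDiffOn ℝ 3 (fun q : ℝ × ℝ => v q.1 q.2) Ω)
    (hw : ContDiffOn ℝ 3 (fun q : ℝ × ℝ => w q.1 q.2) Ω)
    (hc1 : ∀ p ∈ Ω, pdx u p.1 p.2 = -(1 / 2) * (pdx w p.1 p.2) ^ 2)
    (hc2 : ∀ p ∈ Ω, pdy v p.1 p.2 = -(1 / 2) * (pdy w p.1 p.2) ^ 2)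
    (hc3 : ∀ p ∈ Ω, pdy u p.1 p.2 + pdx v p.1 p.2
        = -(pdx w p.1 p.2) * pdy w p.1 p.2) :
    ∀ p ∈ Ω,
      pdx (pdx w) p.1 p.2 * pdy (pdy w) p.1 p.2 = (pdy (pdx w) p.1 p.2) ^ 2 := by
  intro p hp
  have hΩp : Ω ∈ 𝓝 p := hΩ.mem_nhds hp
  simp only [pdx_eq_dirDeriv, pdy_eq_dirDeriv, uncurry_pdx, uncurry_pdy] at hc1 hc2 hc3 ⊢
  exact gaussian_curvature_vanishes_general (1, 0) (0, 1) (hu.contDiffAt hΩp) (hv.contDiffAt hΩp)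
    (hw.contDiffAt hΩp) (eventually_of_mem hΩp hc1) (eventually_of_mem hΩp hc2)
    (eventually_of_mem hΩp hc3)
end

section
/- Let L_x, L_y > 0 and let w : ℝ² → ℝ be three times continuously differentiable on a neighborhood of the closed rectangle [0, L_x] × [0, L_y]. Then ∫₀^{L_x}∫₀^{L_y} ( w_xx·w_yy − w_xy² ) dy dx = ∫₀^{L_y} [ w_x(L_x, y)·w_yy(L_x, y) − w_x(0, y)·w_yy(0, y) ] dy − ∫₀^{L_x} [ w_x(x, L_y)·w_xy(x, L_y) − w_x(x, 0)·w_xy(x, 0) ] dx. -/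
/-!
The integrand is the Jacobian determinant `u_x v_y - u_y v_x` of the gradient map
`(u, v) = (w_x, w_y)`. It is a null Lagrangian: for `u` of class `C¹` and `v` of class `C²` it is
the divergence of the field `(u v_y, -u v_x)`, so the divergence theorem turns its integral into
boundary terms. The symmetry `w_yx = w_xy` brings the result into the stated form.
-/

theorem eventually_differentiableAt_of_contDiffAt {𝕜 E F : Type*} [NontriviallyNormedField 𝕜]
    [NormedAddCommGroup E] [NormedSpace 𝕜 E] [NormedAddCommGroup F] [NormedSpace 𝕜 F]
    {f : E → F} {p : E} {n : WithTop ℕ∞} (hf : ContDiffAt 𝕜 n f p) (hn : 1 ≤ n) :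
    ∀ᶠ q in nhds p, DifferentiableAt 𝕜 f q :=
  ((hf.of_le hn).eventually (by simp)).mono fun _ hq => hq.differentiableAt one_ne_zero

section PartialDerivatives

open Function Filter Topology

variable {f g : ℝ → ℝ → ℝ} {x y : ℝ} {p : ℝ × ℝ} {m n : WithTop ℕ∞}

lemma hasDerivAt_fst_slice (hf : DifferentiableAt ℝ (uncurry f) (x, y)) :
    HasDerivAt (fun x' => f x' y) (fderiv ℝ (uncurry f) (x, y) (1, 0)) x :=
  hf.hasFDerivAt.comp_hasDerivAt (f := fun x' => (x', y)) x
    ((hasDerivAt_id x).prodMk (hasDerivAt_const x y))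

lemma hasDerivAt_snd_slice (hf : DifferentiableAt ℝ (uncurry f) (x, y)) :
    HasDerivAt (fun y' => f x y') (fderiv ℝ (uncurry f) (x, y) (0, 1)) y :=
  hf.hasFDerivAt.comp_hasDerivAt (f := fun y' => (x, y')) y
    ((hasDerivAt_const y x).prodMk (hasDerivAt_id y))

lemma pdx_eq_fderiv (hf : DifferentiableAt ℝ (uncurry f) (x, y)) :
    pdx f x y = fderiv ℝ (uncurry f) (x, y) (1, 0) :=
  (hasDerivAt_fst_slice hf).deriv

lemma pdy_eq_fderiv (hf : DifferentiableAt ℝ (uncurry f) (x, y)) :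
    pdy f x y = fderiv ℝ (uncurry f) (x, y) (0, 1) :=
  (hasDerivAt_snd_slice hf).deriv

lemma pdx_mul (hf : DifferentiableAt ℝ (fun x' => f x' y) x)
    (hg : DifferentiableAt ℝ (fun x' => g x' y) x) :
    pdx (fun x y => f x y * g x y) x y = pdx f x y * g x y + f x y * pdx g x y :=
  deriv_fun_mul hf hg

lemma pdy_mul (hf : DifferentiableAt ℝ (fun y' => f x y') y)
    (hg : DifferentiableAt ℝ (fun y' => g x y') y) :
    pdy (fun x y => f x y * g x y) x y = pdy f x y * g x y + f x y * pdy g x y :=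
  deriv_fun_mul hf hg

lemma uncurry_pdx_eventuallyEq (hf : ContDiffAt ℝ n (uncurry f) p) (hn : 1 ≤ n) :
    uncurry (pdx f) =ᶠ[𝓝 p] fun q => fderiv ℝ (uncurry f) q (1, 0) :=
  (eventually_differentiableAt_of_contDiffAt hf hn).mono fun _ => pdx_eq_fderiv

lemma uncurry_pdy_eventuallyEq (hf : ContDiffAt ℝ n (uncurry f) p) (hn : 1 ≤ n) :
    uncurry (pdy f) =ᶠ[𝓝 p] fun q => fderiv ℝ (uncurry f) q (0, 1) :=
  (eventually_differentiableAt_of_contDiffAt hf hn).mono fun _ => pdy_eq_fderiv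

lemma contDiffAt_pdx (hf : ContDiffAt ℝ n (uncurry f) p) (hmn : m + 1 ≤ n) :
    ContDiffAt ℝ m (uncurry (pdx f)) p :=
  ((hf.fderiv_right hmn).clm_apply contDiffAt_const).congr_of_eventuallyEq
    (uncurry_pdx_eventuallyEq hf (le_add_self.trans hmn))

lemma contDiffAt_pdy (hf : ContDiffAt ℝ n (uncurry f) p) (hmn : m + 1 ≤ n) :
    ContDiffAt ℝ m (uncurry (pdy f)) p :=
  ((hf.fderiv_right hmn).clm_apply contDiffAt_const).congr_of_eventuallyEq
    (uncurry_pdy_eventuallyEq hf (le_add_self.trans hmn))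

lemma pdx_pdy_comm (hf : ContDiffAt ℝ 2 (uncurry f) (x, y)) :
    pdx (pdy f) x y = pdy (pdx f) x y := by
  have hdf : DifferentiableAt ℝ (fderiv ℝ (uncurry f)) (x, y) :=
    (hf.fderiv_right one_add_one_eq_two.le).differentiableAt one_ne_zero
  have hdiff_pdx : DifferentiableAt ℝ (uncurry (pdx f)) (x, y) :=
    (contDiffAt_pdx hf one_add_one_eq_two.le).differentiableAt one_ne_zero
  have hdiff_pdy : DifferentiableAt ℝ (uncurry (pdy f)) (x, y) :=
    (contDiffAt_pdy hf one_add_one_eq_two.le).differentiableAt one_ne_zero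
  calc
    pdx (pdy f) x y = fderiv ℝ (fderiv ℝ (uncurry f)) (x, y) (1, 0) (0, 1) := by
      rw [pdx_eq_fderiv hdiff_pdy, (uncurry_pdy_eventuallyEq hf one_le_two).fderiv_eq,
        fderiv_clm_apply hdf (differentiableAt_const _)]
      simp
    _ = fderiv ℝ (fderiv ℝ (uncurry f)) (x, y) (0, 1) (1, 0) :=
      hf.isSymmSndFDerivAt (by simp) (1, 0) (0, 1)
    _ = pdy (pdx f) x y := by
      rw [pdy_eq_fderiv hdiff_pdx, (uncurry_pdx_eventuallyEq hf one_le_two).fderiv_eq,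
        fderiv_clm_apply hdf (differentiableAt_const _)]
      simp

lemma pdx_mul_pdy_sub_pdy_mul_pdx
    (hf : DifferentiableAt ℝ (uncurry f) (x, y)) (hg : ContDiffAt ℝ 2 (uncurry g) (x, y)) :
    pdx (fun x y => f x y * pdy g x y) x y - pdy (fun x y => f x y * pdx g x y) x y =
      pdx f x y * pdy g x y - pdy f x y * pdx g x y := by
  have hg_x : DifferentiableAt ℝ (uncurry (pdx g)) (x, y) :=
    (contDiffAt_pdx hg one_add_one_eq_two.le).differentiableAt one_ne_zero
  have hg_y : DifferentiableAt ℝ (uncurry (pdy g)) (x, y) :=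
    (contDiffAt_pdy hg one_add_one_eq_two.le).differentiableAt one_ne_zero
  rw [pdx_mul (hasDerivAt_fst_slice hf).differentiableAt
      (hasDerivAt_fst_slice hg_y).differentiableAt,
    pdy_mul (hasDerivAt_snd_slice hf).differentiableAt
      (hasDerivAt_snd_slice hg_x).differentiableAt, pdx_pdy_comm hg]
  ring

end PartialDerivatives

section Rectangle

open Function Set MeasureTheory

variable {a₁ b₁ a₂ b₂ : ℝ}

lemma integral2_congr {E : Type*} [NormedAddCommGroup E] [NormedSpace ℝ E] {F G : ℝ → ℝ → E}
    (h : ∀ x ∈ uIcc a₁ b₁, ∀ y ∈ uIcc a₂ b₂, F x y = G x y) :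
    ∫ x in a₁..b₁, ∫ y in a₂..b₂, F x y = ∫ x in a₁..b₁, ∫ y in a₂..b₂, G x y :=
  intervalIntegral.integral_congr fun x hx => intervalIntegral.integral_congr (h x hx)

lemma integrableOn_fderiv_apply_of_contDiffAt {E F : Type*} [NormedAddCommGroup E]
    [NormedSpace ℝ E] [MeasurableSpace E] [OpensMeasurableSpace E] {μ : Measure E}
    [IsFiniteMeasureOnCompacts μ] [NormedAddCommGroup F] [NormedSpace ℝ F] {f : E → F} {K : Set E}
    (hK : IsCompact K) (hf : ∀ p ∈ K, ContDiffAt ℝ 1 f p) (v : E) :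
    IntegrableOn (fun p => fderiv ℝ f p v) K μ :=
  ContinuousOn.integrableOn_compact' hK hK.measurableSet fun p hp =>
    (((hf p hp).continuousAt_fderiv one_ne_zero).clm_apply
      continuousAt_const).continuousWithinAt

theorem integral2_pdx_sub_pdy {F G : ℝ → ℝ → ℝ}
    (hF : ∀ p ∈ uIcc a₁ b₁ ×ˢ uIcc a₂ b₂, ContDiffAt ℝ 1 (uncurry F) p)
    (hG : ∀ p ∈ uIcc a₁ b₁ ×ˢ uIcc a₂ b₂, ContDiffAt ℝ 1 (uncurry G) p) :
    ∫ x in a₁..b₁, ∫ y in a₂..b₂, (pdx F x y - pdy G x y) =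
      (∫ y in a₂..b₂, (F b₁ y - F a₁ y)) - ∫ x in a₁..b₁, (G x b₂ - G x a₂) := by
  have hF_cont : ContinuousOn (uncurry F) (uIcc a₁ b₁ ×ˢ uIcc a₂ b₂) :=
    fun p hp => (hF p hp).continuousAt.continuousWithinAt
  have hG_cont : ContinuousOn (uncurry G) (uIcc a₁ b₁ ×ˢ uIcc a₂ b₂) :=
    fun p hp => (hG p hp).continuousAt.continuousWithinAt
  have hF_deriv : ∀ p ∈ uIcc a₁ b₁ ×ˢ uIcc a₂ b₂, DifferentiableAt ℝ (uncurry F) p :=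
    fun p hp => (hF p hp).differentiableAt one_ne_zero
  have hG_deriv : ∀ p ∈ uIcc a₁ b₁ ×ˢ uIcc a₂ b₂, DifferentiableAt ℝ (uncurry G) p :=
    fun p hp => (hG p hp).differentiableAt one_ne_zero
  have rectangle_compact : IsCompact (uIcc a₁ b₁ ×ˢ uIcc a₂ b₂) :=
    isCompact_uIcc.prod isCompact_uIcc
  have interior_subset : Ioo (min a₁ b₁) (max a₁ b₁) ×ˢ Ioo (min a₂ b₂) (max a₂ b₂) ⊆
      uIcc a₁ b₁ ×ˢ uIcc a₂ b₂ := prod_mono Ioo_subset_Icc_self Ioo_subset_Icc_self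
  have divergence := integral2_divergence_prod_of_hasFDerivAt (uncurry F) (fun p => -uncurry G p)
    (fderiv ℝ (uncurry F)) (fun p => -fderiv ℝ (uncurry G) p) a₁ a₂ b₁ b₂ hF_cont hG_cont.neg
    (fun p hp => (hF_deriv p (interior_subset hp)).hasFDerivAt)
    (fun p hp => (hG_deriv p (interior_subset hp)).hasFDerivAt.neg)
    ((integrableOn_fderiv_apply_of_contDiffAt rectangle_compact hF (1, 0)).add
      (integrableOn_fderiv_apply_of_contDiffAt rectangle_compact hG (0, 1)).neg)
  calc
    _ = ∫ x in a₁..b₁, ∫ y in a₂..b₂,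
          (fderiv ℝ (uncurry F) (x, y) (1, 0) + (-fderiv ℝ (uncurry G) (x, y)) (0, 1)) :=
      integral2_congr fun x hx y hy => by
        rw [pdx_eq_fderiv (hF_deriv (x, y) ⟨hx, hy⟩), pdy_eq_fderiv (hG_deriv (x, y) ⟨hx, hy⟩),
          neg_apply, sub_eq_add_neg]
    _ = _ := by
      rw [divergence, intervalIntegral.integral_sub, intervalIntegral.integral_sub]
      · simp only [uncurry_apply_pair, intervalIntegral.integral_neg]
        ring
      · exact (hG_cont.uncurry_right b₂ right_mem_uIcc).intervalIntegrable
      · exact (hG_cont.uncurry_right a₂ left_mem_uIcc).intervalIntegrable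
      · exact (hF_cont.uncurry_left b₁ right_mem_uIcc).intervalIntegrable
      · exact (hF_cont.uncurry_left a₁ left_mem_uIcc).intervalIntegrable

theorem integral2_jacobian {u v : ℝ → ℝ → ℝ}
    (hu : ∀ p ∈ uIcc a₁ b₁ ×ˢ uIcc a₂ b₂, ContDiffAt ℝ 1 (uncurry u) p)
    (hv : ∀ p ∈ uIcc a₁ b₁ ×ˢ uIcc a₂ b₂, ContDiffAt ℝ 2 (uncurry v) p) :
    ∫ x in a₁..b₁, ∫ y in a₂..b₂, (pdx u x y * pdy v x y - pdy u x y * pdx v x y) =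
      (∫ y in a₂..b₂, (u b₁ y * pdy v b₁ y - u a₁ y * pdy v a₁ y)) -
        ∫ x in a₁..b₁, (u x b₂ * pdx v x b₂ - u x a₂ * pdx v x a₂) :=
  calc
    _ = ∫ x in a₁..b₁, ∫ y in a₂..b₂,
          (pdx (fun x y => u x y * pdy v x y) x y - pdy (fun x y => u x y * pdx v x y) x y) :=
      integral2_congr fun x hx y hy => (pdx_mul_pdy_sub_pdy_mul_pdx
        ((hu (x, y) ⟨hx, hy⟩).differentiableAt one_ne_zero) (hv (x, y) ⟨hx, hy⟩)).symm
    _ = _ := integral2_pdx_sub_pdy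
      (fun p hp => (hu p hp).mul (contDiffAt_pdy (hv p hp) one_add_one_eq_two.le))
      (fun p hp => (hu p hp).mul (contDiffAt_pdx (hv p hp) one_add_one_eq_two.le))

theorem rectangle_integration_by_parts_general {w : ℝ → ℝ → ℝ}
    (hw : ∀ p ∈ uIcc a₁ b₁ ×ˢ uIcc a₂ b₂, ContDiffAt ℝ 2 (uncurry w) p)
    (hw_y : ∀ p ∈ uIcc a₁ b₁ ×ˢ uIcc a₂ b₂, ContDiffAt ℝ 2 (uncurry (pdy w)) p) :
    ∫ x in a₁..b₁, ∫ y in a₂..b₂,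
        (pdx (pdx w) x y * pdy (pdy w) x y - (pdy (pdx w) x y) ^ 2) =
      (∫ y in a₂..b₂, (pdx w b₁ y * pdy (pdy w) b₁ y - pdx w a₁ y * pdy (pdy w) a₁ y)) -
        ∫ x in a₁..b₁, (pdx w x b₂ * pdy (pdx w) x b₂ - pdx w x a₂ * pdy (pdx w) x a₂) := by
  have mixed : ∀ x ∈ uIcc a₁ b₁, ∀ y ∈ uIcc a₂ b₂, pdx (pdy w) x y = pdy (pdx w) x y :=
    fun x hx y hy => pdx_pdy_comm (hw (x, y) ⟨hx, hy⟩)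
  have edges : ∫ x in a₁..b₁, (pdx w x b₂ * pdx (pdy w) x b₂ - pdx w x a₂ * pdx (pdy w) x a₂) =
      ∫ x in a₁..b₁, (pdx w x b₂ * pdy (pdx w) x b₂ - pdx w x a₂ * pdy (pdx w) x a₂) :=
    intervalIntegral.integral_congr fun x hx => by
      simp only [mixed x hx b₂ right_mem_uIcc, mixed x hx a₂ left_mem_uIcc]
  calc
    _ = ∫ x in a₁..b₁, ∫ y in a₂..b₂,
          (pdx (pdx w) x y * pdy (pdy w) x y - pdy (pdx w) x y * pdx (pdy w) x y) :=
      integral2_congr fun x hx y hy => by rw [mixed x hx y hy, sq]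
    _ = _ := by
      rw [← edges]
      exact integral2_jacobian
        (fun p hp => contDiffAt_pdx (hw p hp) one_add_one_eq_two.le) hw_y

end Rectangle

/-- Integration-by-parts identity on the rectangle relating
`∫∫ (wₓₓ w_yy − wₓy²)` to the boundary terms `[wₓ w_yy]` on the east/west edges
and `[wₓ wₓy]` on the north/south edges. -/
theorem rectangle_integration_by_parts
    (Lx Ly : ℝ) (hLx : 0 < Lx) (hLy : 0 < Ly)
    (w : ℝ → ℝ → ℝ) (U : Set (ℝ × ℝ)) (hU : IsOpen U)
    (hsub : Set.Icc (0 : ℝ) Lx ×ˢ Set.Icc (0 : ℝ) Ly ⊆ U)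
    (hw : ContDiffOn ℝ 3 (fun q : ℝ × ℝ => w q.1 q.2) U) :
    (∫ x in (0 : ℝ)..Lx, ∫ y in (0 : ℝ)..Ly,
        (pdx (pdx w) x y * pdy (pdy w) x y - (pdy (pdx w) x y) ^ 2))
      = (∫ y in (0 : ℝ)..Ly,
          (pdx w Lx y * pdy (pdy w) Lx y - pdx w 0 y * pdy (pdy w) 0 y))
        - ∫ x in (0 : ℝ)..Lx,
            (pdx w x Ly * pdy (pdx w) x Ly - pdx w x 0 * pdy (pdx w) x 0) := by
  have hw_at : ∀ p ∈ Set.uIcc 0 Lx ×ˢ Set.uIcc 0 Ly, ContDiffAt ℝ 3 (Function.uncurry w) p := by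
    rw [Set.uIcc_of_le hLx.le, Set.uIcc_of_le hLy.le]
    exact fun p hp => hw.contDiffAt (hU.mem_nhds (hsub hp))
  exact rectangle_integration_by_parts_general
    (fun p hp => (hw_at p hp).of_le (by norm_num))
    (fun p hp => contDiffAt_pdy (hw_at p hp) (by norm_num))
end

section
/- Let Ω ⊆ ℝ² be open, let ν ∈ ℝ, and let u, v, w : Ω → ℝ be twice continuously differentiable, satisfying at each point of Ω the three η²-effective inextensibility constraints u_x = −(1/2)w_x², v_y = −(1/2)w_y², and u_y + v_x = −w_x·w_y. Define κ₁₁ = w_y·v_xx + w_x·u_xx − (1 + u_x + v_y)·w_xx, κ₂₂ = w_x·u_yy + w_y·v_yy − (1 + u_x + v_y)·w_yy, and κ₁₂ = 2[v_xy·w_y + u_xy·w_x − (1 + u_x + v_y)·w_xy]. Then at every point of Ω: κ₁₁² + κ₂₂² + 2ν·κ₁₁·κ₂₂ + ((1 − ν)/2)·κ₁₂² = (1 + (1/2)w_x² + (1/2)w_y²)² · ( w_xx² + w_yy² + 2ν·w_xx·w_yy + 2(1 − ν)·w_xy² ). -/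
/-!
With `(u₁, u₂) = (u, v)`, the three constraints say that `∂ⱼuᵢ + ∂ᵢuⱼ = -∂ᵢw ∂ⱼw`. As for the
Koszul formula, this determines all second derivatives of the `uₖ`: differentiating once more shows
that `Tᵢⱼₖ = ∂ᵢ∂ⱼuₖ + ∂ₖw ∂ᵢ∂ⱼw` is antisymmetric in its last two indices, it is symmetric in its
first two, and hence it vanishes. So each curvature is `-(1 + ½|∇w|²)` times its linear counterpart,
and the bending energy density is quadratic in the curvatures.
-/

lemma eq_zero_of_symm_of_antisymm {ι M : Type*} [AddGroup M] [IsAddTorsionFree M]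
    {T : ι → ι → ι → M} (hsymm : ∀ i j k, T i j k = T j i k)
    (hanti : ∀ i j k, T i j k = -T i k j) (i j k : ι) : T i j k = 0 := by
  refine self_eq_neg.mp ?_
  calc T i j k = -T k i j := by rw [hanti, hsymm]
    _ = T j k i := by rw [hanti, neg_neg, hsymm]
    _ = -T i j k := by rw [hanti, hsymm]

section SecondDerivative

variable {𝕜 E F : Type*} [NontriviallyNormedField 𝕜] [NormedAddCommGroup E] [NormedSpace 𝕜 E]
  [NormedAddCommGroup F] [NormedSpace 𝕜 F] {f : E → F} {p : E}

lemma differentiableAt_fderiv_of_contDiffAt_two (hf : ContDiffAt 𝕜 2 f p) :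
    DifferentiableAt 𝕜 (fderiv 𝕜 f) p :=
  (hf.fderiv_right (m := 1) le_rfl).differentiableAt one_ne_zero

lemma fderiv_fderiv_apply_const (hf : DifferentiableAt 𝕜 (fderiv 𝕜 f) p) (d e : E) :
    fderiv 𝕜 (fun q ↦ fderiv 𝕜 f q e) p d = fderiv 𝕜 (fderiv 𝕜 f) p d e := by
  simp [fderiv_clm_apply hf (differentiableAt_const e)]

end SecondDerivative

section Inextensible

open scoped Topology RealInnerProductSpace

variable {E F : Type*} [NormedAddCommGroup E] [NormedSpace ℝ E] [NormedAddCommGroup F]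
  [InnerProductSpace ℝ F] {w : E → F} {p : E}

lemma fderiv_fderiv_add_fderiv_fderiv_eq {f g : E → ℝ} {a b : E}
    (hf : DifferentiableAt ℝ (fderiv ℝ f) p) (hg : DifferentiableAt ℝ (fderiv ℝ g) p)
    (hw : DifferentiableAt ℝ (fderiv ℝ w) p)
    (hstrain : ∀ᶠ q in 𝓝 p,
      fderiv ℝ f q b + fderiv ℝ g q a = -⟪fderiv ℝ w q a, fderiv ℝ w q b⟫) (d : E) :
    fderiv ℝ (fderiv ℝ f) p d b + fderiv ℝ (fderiv ℝ g) p d a =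
      -(⟪fderiv ℝ w p a, fderiv ℝ (fderiv ℝ w) p d b⟫ +
        ⟪fderiv ℝ (fderiv ℝ w) p d a, fderiv ℝ w p b⟫) := by
  have hdiff := DFunLike.congr_fun (Filter.EventuallyEq.fderiv_eq (𝕜 := ℝ) hstrain) d
  have hf' := hf.clm_apply (differentiableAt_const b)
  have hg' := hg.clm_apply (differentiableAt_const a)
  have hw' (e : E) := hw.clm_apply (differentiableAt_const e)
  rw [fderiv_fun_add hf' hg', fderiv_fun_neg] at hdiff
  simpa only [add_apply, neg_apply, fderiv_inner_apply ℝ (hw' a) (hw' b),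
    fderiv_fderiv_apply_const hf, fderiv_fderiv_apply_const hg,
    fderiv_fderiv_apply_const hw] using hdiff

theorem fderiv_fderiv_eq_of_inextensible {ι : Type*} {u : ι → E → ℝ} {e : ι → E}
    (hu : ∀ i, ContDiffAt ℝ 2 (u i) p) (hw : ContDiffAt ℝ 2 w p)
    (hinext : ∀ i j, ∀ᶠ q in 𝓝 p, fderiv ℝ (u i) q (e j) + fderiv ℝ (u j) q (e i) =
      -⟪fderiv ℝ w q (e i), fderiv ℝ w q (e j)⟫) (i j k : ι) :
    fderiv ℝ (fderiv ℝ (u k)) p (e i) (e j) =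
      -⟪fderiv ℝ w p (e k), fderiv ℝ (fderiv ℝ w) p (e i) (e j)⟫ := by
  have hu_symm (k : ι) : IsSymmSndFDerivAt ℝ (u k) p := (hu k).isSymmSndFDerivAt (by simp)
  have hw_symm : IsSymmSndFDerivAt ℝ w p := hw.isSymmSndFDerivAt (by simp)
  have hu' (k : ι) := differentiableAt_fderiv_of_contDiffAt_two (hu k)
  have hw' := differentiableAt_fderiv_of_contDiffAt_two hw
  let T (i j k : ι) : ℝ := fderiv ℝ (fderiv ℝ (u k)) p (e i) (e j) +
    ⟪fderiv ℝ w p (e k), fderiv ℝ (fderiv ℝ w) p (e i) (e j)⟫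
  have T_symm (i j k : ι) : T i j k = T j i k := by
    simp only [T, (hu_symm k).eq (e i), hw_symm.eq (e i)]
  have T_antisymm (i j k : ι) : T i j k = -T i k j := by
    simp only [T]
    linarith [fderiv_fderiv_add_fderiv_fderiv_eq (hu' j) (hu' k) hw' (hinext j k) (e i),
      real_inner_comm (fderiv ℝ w p (e k)) (fderiv ℝ (fderiv ℝ w) p (e i) (e j))]
  exact eq_neg_of_add_eq_zero_left (eq_zero_of_symm_of_antisymm T_symm T_antisymm i j k)

end Inextensible

section PartialDerivatives

open Module (Basis)
open scoped Topology

/-- The partial derivatives `pdx` and `pdy` indexed by the coordinate, so that `pd 0 = pdx` and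
`pd 1 = pdy` hold definitionally. -/
noncomputable def pd : Fin 2 → (ℝ → ℝ → ℝ) → ℝ → ℝ → ℝ := ![pdx, pdy]

variable {f : ℝ → ℝ → ℝ} {p : ℝ × ℝ}

lemma pd_eq_fderiv (hf : DifferentiableAt ℝ (fun q : ℝ × ℝ ↦ f q.1 q.2) p) (i : Fin 2) :
    pd i f p.1 p.2 = fderiv ℝ (fun q : ℝ × ℝ ↦ f q.1 q.2) p (Basis.finTwoProd ℝ i) := by
  fin_cases i
  · simpa using! (hf.hasFDerivAt.comp_hasDerivAt p.1
      ((hasDerivAt_id p.1).prodMk (hasDerivAt_const p.1 p.2))).deriv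
  · simpa using! (hf.hasFDerivAt.comp_hasDerivAt p.2
      ((hasDerivAt_const p.2 p.1).prodMk (hasDerivAt_id p.2))).deriv

lemma pd_eventuallyEq_fderiv (hf : ContDiffAt ℝ 2 (fun q : ℝ × ℝ ↦ f q.1 q.2) p) (i : Fin 2) :
    (fun q : ℝ × ℝ ↦ pd i f q.1 q.2) =ᶠ[𝓝 p]
      fun q ↦ fderiv ℝ (fun q : ℝ × ℝ ↦ f q.1 q.2) q (Basis.finTwoProd ℝ i) := by
  filter_upwards [hf.eventually (by simp)] with q hq
  exact pd_eq_fderiv (hq.differentiableAt two_ne_zero) i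

lemma pd_pd_eq_fderiv_fderiv (hf : ContDiffAt ℝ 2 (fun q : ℝ × ℝ ↦ f q.1 q.2) p) (i j : Fin 2) :
    pd i (pd j f) p.1 p.2 = fderiv ℝ (fderiv ℝ (fun q : ℝ × ℝ ↦ f q.1 q.2)) p
      (Basis.finTwoProd ℝ i) (Basis.finTwoProd ℝ j) := by
  have hpd := pd_eventuallyEq_fderiv hf j
  have hf' := differentiableAt_fderiv_of_contDiffAt_two hf
  have hpd_diff := (hf'.clm_apply (differentiableAt_const _)).congr_of_eventuallyEq hpd
  rw [pd_eq_fderiv hpd_diff i, hpd.fderiv_eq, fderiv_fderiv_apply_const hf']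

end PartialDerivatives

/-- The nonlinear curvature `∑ₖ ∂ₖw ∂ᵢ∂ⱼuₖ - (1 + div u) ∂ᵢ∂ⱼw` of a plate with in-plane
displacements `u` and deflection `w`. Its diagonal entries are the `κ₁₁` and `κ₂₂` of the bending
energy, whereas `κ₁₂` is twice its off-diagonal entry. -/
noncomputable def curvature (u : Fin 2 → ℝ → ℝ → ℝ) (w : ℝ → ℝ → ℝ) (i j : Fin 2) (x y : ℝ) : ℝ :=
  ∑ k, pd k w x y * pd i (pd j (u k)) x y - (1 + ∑ k, pd k (u k) x y) * pd i (pd j w) x y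

section Plate

open scoped Topology

variable {u : Fin 2 → ℝ → ℝ → ℝ} {w : ℝ → ℝ → ℝ} {p : ℝ × ℝ}

lemma pd_pd_eq_of_inextensible (hu : ∀ i, ContDiffAt ℝ 2 (fun q : ℝ × ℝ ↦ u i q.1 q.2) p)
    (hw : ContDiffAt ℝ 2 (fun q : ℝ × ℝ ↦ w q.1 q.2) p)
    (hinext : ∀ i j, ∀ᶠ q : ℝ × ℝ in 𝓝 p, pd j (u i) q.1 q.2 + pd i (u j) q.1 q.2 =
      -(pd i w q.1 q.2 * pd j w q.1 q.2)) (i j k : Fin 2) :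
    pd i (pd j (u k)) p.1 p.2 = -(pd k w p.1 p.2 * pd i (pd j w) p.1 p.2) := by
  rw [pd_pd_eq_fderiv_fderiv (hu k), pd_pd_eq_fderiv_fderiv hw,
    pd_eq_fderiv (hw.differentiableAt two_ne_zero), ← Real.inner_apply]
  refine fderiv_fderiv_eq_of_inextensible hu hw (fun i j ↦ ?_) i j k
  filter_upwards [hinext i j, pd_eventuallyEq_fderiv (hu i) j, pd_eventuallyEq_fderiv (hu j) i,
    pd_eventuallyEq_fderiv hw i, pd_eventuallyEq_fderiv hw j] with q hq huij huji hwi hwj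
  rw [← huij, ← huji, ← hwi, ← hwj, hq, Real.inner_apply]

theorem curvature_eq_of_inextensible
    (hu : ∀ i, ContDiffAt ℝ 2 (fun q : ℝ × ℝ ↦ u i q.1 q.2) p)
    (hw : ContDiffAt ℝ 2 (fun q : ℝ × ℝ ↦ w q.1 q.2) p)
    (hinext : ∀ i j, ∀ᶠ q : ℝ × ℝ in 𝓝 p, pd j (u i) q.1 q.2 + pd i (u j) q.1 q.2 =
      -(pd i w q.1 q.2 * pd j w q.1 q.2)) (i j : Fin 2) :
    curvature u w i j p.1 p.2 =
      -(1 + 1 / 2 * ∑ k, pd k w p.1 p.2 ^ 2) * pd i (pd j w) p.1 p.2 := by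
  have hstretch (k : Fin 2) : pd k (u k) p.1 p.2 = -(1 / 2) * pd k w p.1 p.2 ^ 2 := by
    linarith [(hinext k k).self_of_nhds]
  simp only [curvature, pd_pd_eq_of_inextensible hu hw hinext, hstretch, Fin.sum_univ_two]
  ring

end Plate

/-- Under the three η²-effective inextensibility constraints, the
bending energy density factors as `(1 + ½|∇w|²)²` times the linear Kirchhoff
bending density. -/
theorem bending_energy_density_factors
    (Ω : Set (ℝ × ℝ)) (hΩ : IsOpen Ω) (ν : ℝ) (u v w : ℝ → ℝ → ℝ)
    (hu : ContDiffOn ℝ 2 (fun q : ℝ × ℝ => u q.1 q.2) Ω)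
    (hv : ContDiffOn ℝ 2 (fun q : ℝ × ℝ => v q.1 q.2) Ω)
    (hw : ContDiffOn ℝ 2 (fun q : ℝ × ℝ => w q.1 q.2) Ω)
    (hc1 : ∀ p ∈ Ω, pdx u p.1 p.2 = -(1 / 2) * (pdx w p.1 p.2) ^ 2)
    (hc2 : ∀ p ∈ Ω, pdy v p.1 p.2 = -(1 / 2) * (pdy w p.1 p.2) ^ 2)
    (hc3 : ∀ p ∈ Ω, pdy u p.1 p.2 + pdx v p.1 p.2
        = -(pdx w p.1 p.2) * pdy w p.1 p.2) :
    ∀ p ∈ Ω,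
      (pdy w p.1 p.2 * pdx (pdx v) p.1 p.2 + pdx w p.1 p.2 * pdx (pdx u) p.1 p.2
          - (1 + pdx u p.1 p.2 + pdy v p.1 p.2) * pdx (pdx w) p.1 p.2) ^ 2
        + (pdx w p.1 p.2 * pdy (pdy u) p.1 p.2 + pdy w p.1 p.2 * pdy (pdy v) p.1 p.2
            - (1 + pdx u p.1 p.2 + pdy v p.1 p.2) * pdy (pdy w) p.1 p.2) ^ 2
        + 2 * ν *
          (pdy w p.1 p.2 * pdx (pdx v) p.1 p.2 + pdx w p.1 p.2 * pdx (pdx u) p.1 p.2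
            - (1 + pdx u p.1 p.2 + pdy v p.1 p.2) * pdx (pdx w) p.1 p.2) *
          (pdx w p.1 p.2 * pdy (pdy u) p.1 p.2 + pdy w p.1 p.2 * pdy (pdy v) p.1 p.2
            - (1 + pdx u p.1 p.2 + pdy v p.1 p.2) * pdy (pdy w) p.1 p.2)
        + ((1 - ν) / 2) *
          (2 * (pdx (pdy v) p.1 p.2 * pdy w p.1 p.2
              + pdx (pdy u) p.1 p.2 * pdx w p.1 p.2
              - (1 + pdx u p.1 p.2 + pdy v p.1 p.2) * pdx (pdy w) p.1 p.2)) ^ 2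
      = (1 + (1 / 2) * (pdx w p.1 p.2) ^ 2 + (1 / 2) * (pdy w p.1 p.2) ^ 2) ^ 2 *
          ((pdx (pdx w) p.1 p.2) ^ 2 + (pdy (pdy w) p.1 p.2) ^ 2
            + 2 * ν * pdx (pdx w) p.1 p.2 * pdy (pdy w) p.1 p.2
            + 2 * (1 - ν) * (pdx (pdy w) p.1 p.2) ^ 2) := by
  intro p hp
  have hΩp : Ω ∈ nhds p := hΩ.mem_nhds hp
  have hsmooth : ∀ i, ContDiffAt ℝ 2 (fun q : ℝ × ℝ ↦ ![u, v] i q.1 q.2) p :=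
    Fin.forall_fin_two.mpr ⟨hu.contDiffAt hΩp, hv.contDiffAt hΩp⟩
  have hinext (i j : Fin 2) : ∀ᶠ q : ℝ × ℝ in nhds p,
      pd j (![u, v] i) q.1 q.2 + pd i (![u, v] j) q.1 q.2 =
        -(pd i w q.1 q.2 * pd j w q.1 q.2) := by
    filter_upwards [hΩp] with q hq
    revert i j
    simp only [pd, Fin.forall_fin_two, Matrix.cons_val_zero, Matrix.cons_val_one]
    refine ⟨⟨?_, ?_⟩, ?_, ?_⟩ <;> linarith [hc1 q hq, hc2 q hq, hc3 q hq]
  have hκ := curvature_eq_of_inextensible hsmooth (hw.contDiffAt hΩp) hinext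
  let κ (i j : Fin 2) : ℝ := curvature ![u, v] w i j p.1 p.2
  calc
    _ = κ 0 0 ^ 2 + κ 1 1 ^ 2 + 2 * ν * κ 0 0 * κ 1 1 + (1 - ν) / 2 * (2 * κ 0 1) ^ 2 := by
      simp only [κ, curvature, pd, Fin.sum_univ_two, Matrix.cons_val_zero, Matrix.cons_val_one]
      ring
    _ = _ := by
      simp only [κ, hκ, pd, Fin.sum_univ_two, Matrix.cons_val_zero, Matrix.cons_val_one]
      ring
end

section
/- Let L_x, L_y > 0 and let u, v, w : ℝ² → ℝ be twice continuously differentiable on a neighborhood of [0, L_x] × [0, L_y], satisfying at every point the three η²-effective inextensibility constraints u_x = −(1/2)w_x², v_y = −(1/2)w_y², and u_y + v_x = −w_x·w_y, together with the clamped-edge conditions u(0, y) = 0 and v(0, y) = 0 for all y ∈ [0, L_y]. Then for all (x, y) ∈ [0, L_x] × [0, L_y]: u(x, y) = −(1/2)∫₀ˣ w_x(ξ, y)² dξ and v(x, y) = ∫₀ˣ∫₀^{ξ} w_x(ζ, y)·w_xy(ζ, y) dζ dξ − ∫₀ˣ w_x(ξ, y)·w_y(ξ, y) dξ. In particular, the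 in-plane displacements u and v are determined by the transverse deflection w alone. -/
/-!
With `u` clamped, integrating `u_x = -(1/2) w_x²` along the span gives the formula for `u`.
Differentiating that integral in `y` gives `u_y`; at boundary points of the chord this determines
the two-sided derivative `u_y` because one-sided derivatives are unique on an interval. The shear
constraint then expresses `v_x` through `w` alone, and a second integration along the span
gives `v`.
-/

open Set Topology

section LeibnizRule

variable {𝕜 E : Type*} [RCLike 𝕜] [NormedAddCommGroup E] [NormedSpace ℝ E] [NormedSpace 𝕜 E]

theorem hasDerivAt_intervalIntegral_of_continuousOn {F F' : ℝ → 𝕜 → E} {a b : ℝ} {W : Set 𝕜}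
    {y : 𝕜} (hW : W ∈ 𝓝 y) (hF : ∀ z ∈ W, ContinuousOn (fun t => F t z) (uIcc a b))
    (hF' : ContinuousOn (fun q : ℝ × 𝕜 => F' q.1 q.2) (uIcc a b ×ˢ W))
    (hderiv : ∀ t ∈ uIcc a b, ∀ z ∈ W, HasDerivAt (F t) (F' t z) z) :
    HasDerivAt (fun z => ∫ t in a..b, F t z) (∫ t in a..b, F' t y) y := by
  obtain ⟨K, hKy, hKW, hK⟩ := local_compact_nhds hW
  have hyW : y ∈ W := mem_of_mem_nhds hW
  obtain ⟨C, hC⟩ := (isCompact_uIcc.prod hK).exists_bound_of_continuousOn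
    (hF'.mono (prod_mono_right hKW))
  have hslice : ContinuousOn (fun t => F' t y) (uIcc a b) := hF'.uncurry_right y hyW
  refine (intervalIntegral.hasDerivAt_integral_of_dominated_loc_of_deriv_le
    (F := fun z t => F t z) (F' := fun z t => F' t z) (bound := fun _ => C) hKy ?_
    (hF y hyW).intervalIntegrable ?_ ?_ intervalIntegrable_const ?_).2
  · filter_upwards [hW] with z hz
    exact (hF z hz).intervalIntegrable.def'.aestronglyMeasurable
  · exact hslice.intervalIntegrable.def'.aestronglyMeasurable
  · exact .of_forall fun t ht z hz => hC (t, z) ⟨uIoc_subset_uIcc ht, hz⟩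
  · exact .of_forall fun t ht z hz => hderiv t (uIoc_subset_uIcc ht) z (hKW hz)

end LeibnizRule

section PartialDerivatives

variable {f g : ℝ → ℝ → ℝ} {U : Set (ℝ × ℝ)} {J : Set ℝ} {a b x y : ℝ}

theorem hasDerivAt_slice_fst (h : DifferentiableAt ℝ (fun q : ℝ × ℝ => f q.1 q.2) (x, y)) :
    HasDerivAt (fun x' => f x' y) (fderiv ℝ (fun q : ℝ × ℝ => f q.1 q.2) (x, y) (1, 0)) x :=
  h.hasFDerivAt.comp_hasDerivAt (f := fun x' => (x', y)) x
    ((hasDerivAt_id x).prodMk (hasDerivAt_const x y))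

theorem hasDerivAt_slice_snd (h : DifferentiableAt ℝ (fun q : ℝ × ℝ => f q.1 q.2) (x, y)) :
    HasDerivAt (fun y' => f x y') (fderiv ℝ (fun q : ℝ × ℝ => f q.1 q.2) (x, y) (0, 1)) y :=
  h.hasFDerivAt.comp_hasDerivAt (f := fun y' => (x, y')) y
    ((hasDerivAt_const y x).prodMk (hasDerivAt_id y))

theorem hasDerivAt_pdx (h : DifferentiableAt ℝ (fun q : ℝ × ℝ => f q.1 q.2) (x, y)) :
    HasDerivAt (fun x' => f x' y) (pdx f x y) x :=
  (hasDerivAt_slice_fst h).differentiableAt.hasDerivAt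

theorem hasDerivAt_pdy (h : DifferentiableAt ℝ (fun q : ℝ × ℝ => f q.1 q.2) (x, y)) :
    HasDerivAt (fun y' => f x y') (pdy f x y) y :=
  (hasDerivAt_slice_snd h).differentiableAt.hasDerivAt

theorem contDiffOn_pdx {m n : WithTop ℕ∞} (hU : IsOpen U)
    (hf : ContDiffOn ℝ n (fun q : ℝ × ℝ => f q.1 q.2) U) (hmn : m + 1 ≤ n) :
    ContDiffOn ℝ m (fun q : ℝ × ℝ => pdx f q.1 q.2) U := by
  have hd : DifferentiableOn ℝ (fun q : ℝ × ℝ => f q.1 q.2) U :=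
    (hf.of_le (le_add_self.trans hmn)).differentiableOn one_ne_zero
  exact ((hf.fderiv_of_isOpen hU hmn).clm_apply contDiffOn_const).congr fun p hp =>
    (hasDerivAt_slice_fst (hd.differentiableAt (hU.mem_nhds hp))).deriv

theorem contDiffOn_pdy {m n : WithTop ℕ∞} (hU : IsOpen U)
    (hf : ContDiffOn ℝ n (fun q : ℝ × ℝ => f q.1 q.2) U) (hmn : m + 1 ≤ n) :
    ContDiffOn ℝ m (fun q : ℝ × ℝ => pdy f q.1 q.2) U := by
  have hd : DifferentiableOn ℝ (fun q : ℝ × ℝ => f q.1 q.2) U :=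
    (hf.of_le (le_add_self.trans hmn)).differentiableOn one_ne_zero
  exact ((hf.fderiv_of_isOpen hU hmn).clm_apply contDiffOn_const).congr fun p hp =>
    (hasDerivAt_slice_snd (hd.differentiableAt (hU.mem_nhds hp))).deriv

theorem pdy_const_mul_sq (c : ℝ) (h : DifferentiableAt ℝ (fun q : ℝ × ℝ => g q.1 q.2) (x, y)) :
    pdy (fun x y => c * g x y ^ 2) x y = 2 * c * (g x y * pdy g x y) := by
  have hsq := (((hasDerivAt_pdy h).pow 2).const_mul c).deriv
  simp only [Pi.pow_apply] at hsq
  rw [pdy, hsq]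
  ring

theorem pdy_eq_zero_of_eqOn_zero
    (hf : DifferentiableAt ℝ (fun q : ℝ × ℝ => f q.1 q.2) (x, y))
    (hJ : UniqueDiffWithinAt ℝ J y) (hy : y ∈ J) (hzero : ∀ z ∈ J, f x z = 0) :
    pdy f x y = 0 :=
  hJ.eq_deriv J (hasDerivAt_pdy hf).hasDerivWithinAt
    ((hasDerivWithinAt_const y J 0).congr hzero (hzero y hy))

theorem integral_eq_sub_of_pdx_eq {g : ℝ → ℝ}
    (hf : ∀ t ∈ uIcc a b, DifferentiableAt ℝ (fun q : ℝ × ℝ => f q.1 q.2) (t, y))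
    (hg : ContinuousOn g (uIcc a b)) (hfg : ∀ t ∈ uIcc a b, pdx f t y = g t) :
    ∫ t in a..b, g t = f b y - f a y :=
  intervalIntegral.integral_eq_sub_of_hasDerivAt (f := fun t => f t y)
    (fun t ht => hfg t ht ▸ hasDerivAt_pdx (hf t ht)) hg.intervalIntegrable

theorem hasDerivAt_integral_pdy (hU : IsOpen U) (hsub : uIcc a b ×ˢ {y} ⊆ U)
    (hg : ContDiffOn ℝ 1 (fun q : ℝ × ℝ => g q.1 q.2) U) :
    HasDerivAt (fun z => ∫ t in a..b, g t z) (∫ t in a..b, pdy g t y) y := by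
  obtain ⟨S, W, -, hW, hS, hyW, hSW⟩ :=
    generalized_tube_lemma isCompact_uIcc isCompact_singleton hU hsub
  have htube : uIcc a b ×ˢ W ⊆ U := (prod_mono_left hS).trans hSW
  refine hasDerivAt_intervalIntegral_of_continuousOn (hW.mem_nhds (hyW rfl))
    (fun z hz => (hg.continuousOn.mono htube).uncurry_right z hz)
    ((contDiffOn_pdy hU hg (zero_add 1).le).continuousOn.mono htube) fun t ht z hz => ?_
  exact hasDerivAt_pdy
    ((hg.differentiableOn one_ne_zero).differentiableAt (hU.mem_nhds (htube ⟨ht, hz⟩)))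

theorem integral_pdy_eq_sub_of_pdx_eq (hU : IsOpen U) (hsub : uIcc a b ×ˢ J ⊆ U)
    (hJ : UniqueDiffWithinAt ℝ J y) (hy : y ∈ J)
    (hf : ∀ t ∈ uIcc a b, ∀ z ∈ J, DifferentiableAt ℝ (fun q : ℝ × ℝ => f q.1 q.2) (t, z))
    (hg : ContDiffOn ℝ 1 (fun q : ℝ × ℝ => g q.1 q.2) U)
    (hfg : ∀ t ∈ uIcc a b, ∀ z ∈ J, pdx f t z = g t z) :
    ∫ t in a..b, pdy g t y = pdy f b y - pdy f a y := by
  have hftc : ∀ z ∈ J, ∫ t in a..b, g t z = f b z - f a z := fun z hz =>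
    integral_eq_sub_of_pdx_eq (fun t ht => hf t ht z hz)
      ((hg.continuousOn.mono hsub).uncurry_right z hz) (fun t ht => hfg t ht z hz)
  have hdiff : HasDerivAt (fun z => f b z - f a z) (pdy f b y - pdy f a y) y :=
    (hasDerivAt_pdy (hf b right_mem_uIcc y hy)).sub (hasDerivAt_pdy (hf a left_mem_uIcc y hy))
  have hint := hasDerivAt_integral_pdy hU
    ((prod_mono_right (singleton_subset_iff.2 hy)).trans hsub) hg
  exact hJ.eq_deriv J hint.hasDerivWithinAt
    (hdiff.hasDerivWithinAt.congr hftc (hftc y hy))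

end PartialDerivatives

section InextensiblePlate

variable {u v w : ℝ → ℝ → ℝ} {U : Set (ℝ × ℝ)} {J : Set ℝ} {a b y : ℝ}

theorem spanwise_displacement_eq
    (hu : ∀ t ∈ uIcc a b, DifferentiableAt ℝ (fun q : ℝ × ℝ => u q.1 q.2) (t, y))
    (hwx : ContinuousOn (fun t => pdx w t y) (uIcc a b))
    (hspan : ∀ t ∈ uIcc a b, pdx u t y = -(1 / 2) * pdx w t y ^ 2) (hclamp : u a y = 0) :
    u b y = -(1 / 2) * ∫ t in a..b, pdx w t y ^ 2 :=
  calc u b y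
    _ = u b y - u a y := by rw [hclamp, sub_zero]
    _ = ∫ t in a..b, -(1 / 2) * pdx w t y ^ 2 :=
      (integral_eq_sub_of_pdx_eq hu (continuousOn_const.mul (hwx.pow 2)) hspan).symm
    _ = -(1 / 2) * ∫ t in a..b, pdx w t y ^ 2 := intervalIntegral.integral_const_mul _ _

theorem pdy_spanwise_displacement_eq (hU : IsOpen U) (hsub : uIcc a b ×ˢ J ⊆ U)
    (hJ : UniqueDiffWithinAt ℝ J y) (hy : y ∈ J)
    (hu : ∀ t ∈ uIcc a b, ∀ z ∈ J, DifferentiableAt ℝ (fun q : ℝ × ℝ => u q.1 q.2) (t, z))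
    (hw : ContDiffOn ℝ 2 (fun q : ℝ × ℝ => w q.1 q.2) U)
    (hspan : ∀ t ∈ uIcc a b, ∀ z ∈ J, pdx u t z = -(1 / 2) * pdx w t z ^ 2)
    (hclamp : ∀ z ∈ J, u a z = 0) :
    pdy u b y = -∫ t in a..b, pdx w t y * pdy (pdx w) t y := by
  have hwx := contDiffOn_pdx hU hw one_add_one_eq_two.le
  have hslope : pdy u a y = 0 :=
    pdy_eq_zero_of_eqOn_zero (hu a left_mem_uIcc y hy) hJ hy hclamp
  have hleibniz := integral_pdy_eq_sub_of_pdx_eq hU hsub hJ hy hu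
    (contDiffOn_const.mul (hwx.pow 2)) hspan
  rw [hslope, sub_zero] at hleibniz
  rw [← hleibniz, ← intervalIntegral.integral_neg]
  refine intervalIntegral.integral_congr fun t ht => ?_
  have hd := (hwx.differentiableOn one_ne_zero).differentiableAt
    (hU.mem_nhds (hsub (mk_mem_prod ht hy)))
  rw [pdy_const_mul_sq _ hd]
  ring

theorem chordwise_displacement_eq
    (hv : ∀ t ∈ uIcc a b, DifferentiableAt ℝ (fun q : ℝ × ℝ => v q.1 q.2) (t, y))
    (hwx : ContinuousOn (fun t => pdx w t y) (uIcc a b))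
    (hwy : ContinuousOn (fun t => pdy w t y) (uIcc a b))
    (hwxy : ContinuousOn (fun t => pdy (pdx w) t y) (uIcc a b))
    (huy : ∀ t ∈ uIcc a b, pdy u t y = -∫ s in a..t, pdx w s y * pdy (pdx w) s y)
    (hshear : ∀ t ∈ uIcc a b, pdy u t y + pdx v t y = -pdx w t y * pdy w t y)
    (hclamp : v a y = 0) :
    v b y = (∫ t in a..b, ∫ s in a..t, pdx w s y * pdy (pdx w) s y)
      - ∫ t in a..b, pdx w t y * pdy w t y := by
  have hinner : ContinuousOn (fun t => ∫ s in a..t, pdx w s y * pdy (pdx w) s y) (uIcc a b) :=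
    intervalIntegral.continuousOn_primitive_interval (hwx.mul hwxy).integrableOn_uIcc
  have hprod : ContinuousOn (fun t => pdx w t y * pdy w t y) (uIcc a b) := hwx.mul hwy
  have hvx : ∀ t ∈ uIcc a b, pdx v t y =
      (∫ s in a..t, pdx w s y * pdy (pdx w) s y) - pdx w t y * pdy w t y := fun t ht => by
    linarith [huy t ht, hshear t ht]
  calc v b y
    _ = v b y - v a y := by rw [hclamp, sub_zero]
    _ = ∫ t in a..b, ((∫ s in a..t, pdx w s y * pdy (pdx w) s y) - pdx w t y * pdy w t y) :=
      (integral_eq_sub_of_pdx_eq hv (hinner.sub hprod) hvx).symm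
    _ = _ := intervalIntegral.integral_sub hinner.intervalIntegrable hprod.intervalIntegrable

theorem inplane_displacements_determined_general {L : ℝ} (hU : IsOpen U)
    (hJ : UniqueDiffOn ℝ J) (hsub : Icc 0 L ×ˢ J ⊆ U)
    (hu : DifferentiableOn ℝ (fun q : ℝ × ℝ => u q.1 q.2) U)
    (hv : DifferentiableOn ℝ (fun q : ℝ × ℝ => v q.1 q.2) U)
    (hw : ContDiffOn ℝ 2 (fun q : ℝ × ℝ => w q.1 q.2) U)
    (hspan : ∀ x ∈ Icc 0 L, ∀ y ∈ J, pdx u x y = -(1 / 2) * pdx w x y ^ 2)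
    (hshear : ∀ x ∈ Icc 0 L, ∀ y ∈ J, pdy u x y + pdx v x y = -pdx w x y * pdy w x y)
    (hclampu : ∀ y ∈ J, u 0 y = 0) (hclampv : ∀ y ∈ J, v 0 y = 0) :
    ∀ x ∈ Icc 0 L, ∀ y ∈ J,
      u x y = -(1 / 2) * ∫ ξ in (0 : ℝ)..x, pdx w ξ y ^ 2 ∧
      v x y = (∫ ξ in (0 : ℝ)..x, ∫ ζ in (0 : ℝ)..ξ, pdx w ζ y * pdy (pdx w) ζ y)
        - ∫ ξ in (0 : ℝ)..x, pdx w ξ y * pdy w ξ y := by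
  intro x hx y hy
  have hseg : uIcc 0 x ⊆ Icc 0 L := uIcc_subset_Icc ⟨le_rfl, hx.1.trans hx.2⟩ hx
  have hdiff {f : ℝ → ℝ → ℝ} (hf : DifferentiableOn ℝ (fun q : ℝ × ℝ => f q.1 q.2) U) :
      ∀ t ∈ Icc 0 L, ∀ z ∈ J, DifferentiableAt ℝ (fun q : ℝ × ℝ => f q.1 q.2) (t, z) :=
    fun t ht z hz => hf.differentiableAt (hU.mem_nhds (hsub ⟨ht, hz⟩))
  have hslice {f : ℝ → ℝ → ℝ} (hf : ContinuousOn (fun q : ℝ × ℝ => f q.1 q.2) U) :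
      ContinuousOn (fun t => f t y) (uIcc 0 x) :=
    ((hf.mono hsub).uncurry_right y hy).mono hseg
  have hwx := contDiffOn_pdx hU hw one_add_one_eq_two.le
  have hwx_slice := hslice hwx.continuousOn
  have huy : ∀ ξ ∈ uIcc 0 x, pdy u ξ y = -∫ ζ in (0 : ℝ)..ξ, pdx w ζ y * pdy (pdx w) ζ y :=
    fun ξ hξ => by
      have hseg_ξ := (uIcc_subset_uIcc_left hξ).trans hseg
      exact pdy_spanwise_displacement_eq hU ((prod_mono_left hseg_ξ).trans hsub) (hJ y hy) hy
        (fun t ht => hdiff hu t (hseg_ξ ht)) hw (fun t ht => hspan t (hseg_ξ ht)) hclampu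
  exact ⟨spanwise_displacement_eq (fun t ht => hdiff hu t (hseg ht) y hy) hwx_slice
      (fun t ht => hspan t (hseg ht) y hy) (hclampu y hy),
    chordwise_displacement_eq (fun t ht => hdiff hv t (hseg ht) y hy) hwx_slice
      (hslice (contDiffOn_pdy hU hw one_add_one_eq_two.le).continuousOn)
      (hslice (contDiffOn_pdy hU hwx (zero_add 1).le).continuousOn) huy
      (fun t ht => hshear t (hseg ht) y hy) (hclampv y hy)⟩

end InextensiblePlate

/-- For a plate clamped along `{x = 0}` and satisfying the three
η²-effective inextensibility constraints, the in-plane displacements `u` and `v`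
are determined by the transverse deflection `w`:
`u(x,y) = −(1/2)∫₀ˣ wₓ(ξ,y)² dξ` and
`v(x,y) = ∫₀ˣ∫₀^ξ wₓ wₓy dζ dξ − ∫₀ˣ wₓ w_y dξ`. -/
theorem inplane_displacements_determined
    (Lx Ly : ℝ) (hLx : 0 < Lx) (hLy : 0 < Ly)
    (u v w : ℝ → ℝ → ℝ) (U : Set (ℝ × ℝ)) (hU : IsOpen U)
    (hsub : Set.Icc (0 : ℝ) Lx ×ˢ Set.Icc (0 : ℝ) Ly ⊆ U)
    (hu : ContDiffOn ℝ 2 (fun q : ℝ × ℝ => u q.1 q.2) U)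
    (hv : ContDiffOn ℝ 2 (fun q : ℝ × ℝ => v q.1 q.2) U)
    (hw : ContDiffOn ℝ 2 (fun q : ℝ × ℝ => w q.1 q.2) U)
    (hc1 : ∀ p ∈ U, pdx u p.1 p.2 = -(1 / 2) * (pdx w p.1 p.2) ^ 2)
    (hc2 : ∀ p ∈ U, pdy v p.1 p.2 = -(1 / 2) * (pdy w p.1 p.2) ^ 2)
    (hc3 : ∀ p ∈ U, pdy u p.1 p.2 + pdx v p.1 p.2
        = -(pdx w p.1 p.2) * pdy w p.1 p.2)
    (hclampu : ∀ y ∈ Set.Icc (0 : ℝ) Ly, u 0 y = 0)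
    (hclampv : ∀ y ∈ Set.Icc (0 : ℝ) Ly, v 0 y = 0) :
    ∀ x ∈ Set.Icc (0 : ℝ) Lx, ∀ y ∈ Set.Icc (0 : ℝ) Ly,
      u x y = -(1 / 2) * ∫ ξ in (0 : ℝ)..x, (pdx w ξ y) ^ 2 ∧
      v x y = (∫ ξ in (0 : ℝ)..x, ∫ ζ in (0 : ℝ)..ξ, pdx w ζ y * pdy (pdx w) ζ y)
        - ∫ ξ in (0 : ℝ)..x, pdx w ξ y * pdy w ξ y := by
  exact inplane_displacements_determined_general hU (uniqueDiffOn_Icc hLy) hsub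
    (hu.differentiableOn two_ne_zero) (hv.differentiableOn two_ne_zero) hw
    (fun x hx y hy => hc1 (x, y) (hsub ⟨hx, hy⟩)) (fun x hx y hy => hc3 (x, y) (hsub ⟨hx, hy⟩))
    hclampu hclampv
end

section
/- Let L_x, L_y > 0, D > 0, and let u, v, w, λ₁, λ₂ : ℝ² × ℝ → ℝ be smooth on a neighborhood of [0, L_x] × [0, L_y] × ℝ. Suppose the Model II system holds at every point: u_tt + ∂_x λ₁ = 0; v_tt + ∂_y λ₂ = 0; and w_tt + D[Δ((1 + |∇w|²)Δw) − ∇·(|Δw|²∇w)] + ∂_x(λ₁ w_x) + ∂_y(λ₂ w_y) = 0, where ∇ and Δ act in the spatial variables (x, y). Suppose further λ₁(L_x, y, t) = 0 and λ₂(x, 0, t) = 0 for all admissible (x, y, t). Then λ₁(x, y, t) = ∫ₓ^{L_x} u_tt(ξ, y, t) dξ, λ₂(x, y, t) = −∫₀^{y} v_tt(x, ζ, t) dζ, and w satisfies the closed equation w_tt + D·Δ[(1 + |∇w|²)Δw] − D·∇·(|Δw|²∇w) + ∂_x( w_x · ∫ₓ^{L_x} u_tt(ξ, y, t) dξ ) −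 ∂_y( w_y · ∫₀^{y} v_tt(x, ζ, t) dζ ) = 0. -/
/-- Partial derivative in the first spatial variable `x`. -/
noncomputable def pX (f : ℝ → ℝ → ℝ → ℝ) (x y t : ℝ) : ℝ := deriv (fun s => f s y t) x

/-- Partial derivative in the second spatial variable `y`. -/
noncomputable def pY (f : ℝ → ℝ → ℝ → ℝ) (x y t : ℝ) : ℝ := deriv (fun s => f x s t) y

/-- Partial derivative in the time variable `t`. -/
noncomputable def pT (f : ℝ → ℝ → ℝ → ℝ) (x y t : ℝ) : ℝ := deriv (fun s => f x y s) t

/-- Spatial Laplacian `Δf = fₓₓ + f_yy`. -/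
noncomputable def lap (f : ℝ → ℝ → ℝ → ℝ) (x y t : ℝ) : ℝ :=
  pX (pX f) x y t + pY (pY f) x y t

/-- Squared spatial gradient `|∇f|² = fₓ² + f_y²`. -/
noncomputable def gradSq (f : ℝ → ℝ → ℝ → ℝ) (x y t : ℝ) : ℝ :=
  (pX f x y t) ^ 2 + (pY f x y t) ^ 2

/-!
Along each line the multiplier is the primitive of a continuous acceleration which vanishes at the
free end, so the fundamental theorem of calculus gives the integral formulas. The equations of
motion are only known on the closed rectangle, so at its boundary the multiplier and the integral
need not agree on a neighbourhood, and the two-sided derivatives in the `w`-equation cannot be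
matched by rewriting one function into the other. They do agree in value and in first derivative
at each point of the rectangle, which is all the product rule sees.
-/

open Set
open scoped Interval

lemma contDiffOn_lineDeriv {𝕜 E F : Type*} [NontriviallyNormedField 𝕜] [NormedAddCommGroup E]
    [NormedSpace 𝕜 E] [NormedAddCommGroup F] [NormedSpace 𝕜 F] {f : E → F} {U : Set E}
    {m n : WithTop ℕ∞} (hU : IsOpen U) (hf : ContDiffOn 𝕜 n f U) (hmn : m + 1 ≤ n) (v : E) :
    ContDiffOn 𝕜 m (fun p ↦ lineDeriv 𝕜 f p v) U := by
  have hn : n ≠ 0 := (lt_of_lt_of_le (by simp) hmn).ne'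
  refine ((hf.fderiv_of_isOpen hU hmn).clm_apply (contDiffOn_const (c := v))).congr fun p hp ↦ ?_
  exact ((hf.differentiableOn hn).differentiableAt (hU.mem_nhds hp)).lineDeriv_eq_fderiv

section Primitive

lemma eq_integral_of_add_deriv_eq_zero {E : Type*} [NormedAddCommGroup E] [NormedSpace ℝ E]
    [CompleteSpace E] {f g : ℝ → E} {x c : ℝ} (hf : ∀ s ∈ [[x, c]], DifferentiableAt ℝ f s)
    (hg : ContinuousOn g [[x, c]]) (hfg : ∀ s ∈ [[x, c]], g s + deriv f s = 0) (hc : f c = 0) :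
    f x = ∫ s in x..c, g s := by
  have hderiv : ∀ s ∈ [[x, c]], HasDerivAt f (-g s) s := fun s hs ↦
    neg_eq_of_add_eq_zero_right (hfg s hs) ▸ (hf s hs).hasDerivAt
  have hint := intervalIntegral.integral_eq_sub_of_hasDerivAt hderiv hg.intervalIntegrable.neg
  rw [intervalIntegral.integral_neg, hc, zero_sub] at hint
  exact (neg_injective hint).symm

lemma hasDerivAt_integral_left_of_continuousOn {E : Type*} [NormedAddCommGroup E]
    [NormedSpace ℝ E] [CompleteSpace E] {g : ℝ → E} {V : Set ℝ} {x c : ℝ} (hV : IsOpen V)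
    (hxc : [[x, c]] ⊆ V) (hg : ContinuousOn g V) :
    HasDerivAt (fun a ↦ ∫ s in a..c, g s) (-g x) x :=
  have hx : x ∈ V := hxc left_mem_uIcc
  intervalIntegral.integral_hasDerivAt_left (hg.mono hxc).intervalIntegrable
    (hg.stronglyMeasurableAtFilter hV x hx) (hg.continuousAt (hV.mem_nhds hx))

lemma deriv_mul_eq_of_hasDerivAt {𝕜 A : Type*} [NontriviallyNormedField 𝕜] [NormedRing A]
    [NormedAlgebra 𝕜 A] {f g h : 𝕜 → A} {f' : A} {x : 𝕜} (hf : HasDerivAt f f' x)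
    (hg : HasDerivAt g f' x) (hfg : f x = g x) (hh : DifferentiableAt 𝕜 h x) :
    deriv (fun s ↦ f s * h s) x = deriv (fun s ↦ g s * h s) x := by
  rw [(hf.fun_mul hh.hasDerivAt).deriv, (hg.fun_mul hh.hasDerivAt).deriv, hfg]

variable {A : Type*} [NormedCommRing A] [NormedAlgebra ℝ A] [CompleteSpace A]
  {f g h : ℝ → A} {V : Set ℝ} {x c : ℝ}

lemma deriv_mul_integral_eq_deriv_mul (hV : IsOpen V) (hxc : [[x, c]] ⊆ V)
    (hf : ∀ s ∈ [[x, c]], DifferentiableAt ℝ f s) (hg : ContinuousOn g V)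
    (hfg : ∀ s ∈ [[x, c]], g s + deriv f s = 0) (hc : f c = 0) (hh : DifferentiableAt ℝ h x) :
    deriv (fun a ↦ h a * ∫ s in a..c, g s) x = deriv (fun a ↦ f a * h a) x := by
  have hfx : HasDerivAt f (-g x) x :=
    neg_eq_of_add_eq_zero_right (hfg x left_mem_uIcc) ▸ (hf x left_mem_uIcc).hasDerivAt
  simp only [mul_comm (h _)]
  exact deriv_mul_eq_of_hasDerivAt (hasDerivAt_integral_left_of_continuousOn hV hxc hg) hfx
    (eq_integral_of_add_deriv_eq_zero hf (hg.mono hxc) hfg hc).symm hh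

lemma eq_integral_and_deriv_mul_integral_eq_along {P : Type*} [NormedAddCommGroup P]
    [NormedSpace ℝ P] {G L H : P → A} {γ : ℝ → P} {U : Set P} (hγ : Differentiable ℝ γ)
    (hU : IsOpen U) (hL : DifferentiableOn ℝ L U) (hG : ContinuousOn G U)
    (hH : DifferentiableOn ℝ H U) (hmem : ∀ s ∈ [[x, c]], γ s ∈ U)
    (hGL : ∀ s ∈ [[x, c]], G (γ s) + deriv (fun r ↦ L (γ r)) s = 0) (hc : L (γ c) = 0) :
    L (γ x) = (∫ s in x..c, G (γ s)) ∧
      deriv (fun a ↦ H (γ a) * ∫ s in a..c, G (γ s)) x = deriv (fun a ↦ L (γ a) * H (γ a)) x := by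
  have hV : IsOpen (γ ⁻¹' U) := hU.preimage hγ.continuous
  have hLγ : ∀ s ∈ [[x, c]], DifferentiableAt ℝ (fun r ↦ L (γ r)) s := fun s hs ↦
    (hL.differentiableAt (hU.mem_nhds (hmem s hs))).comp s (hγ s)
  have hGγ : ContinuousOn (fun s ↦ G (γ s)) (γ ⁻¹' U) :=
    hG.comp hγ.continuous.continuousOn (mapsTo_preimage γ U)
  have hHγ : DifferentiableAt ℝ (fun s ↦ H (γ s)) x :=
    (hH.differentiableAt (hU.mem_nhds (hmem x left_mem_uIcc))).comp x (hγ x)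
  exact ⟨eq_integral_of_add_deriv_eq_zero hLγ (hGγ.mono hmem) hGL hc,
    deriv_mul_integral_eq_deriv_mul hV hmem hLγ hGγ hGL hc hHγ⟩

end Primitive

section PartialDerivatives

variable {f : ℝ → ℝ → ℝ → ℝ} {U : Set (ℝ × ℝ × ℝ)} {m n : WithTop ℕ∞}

lemma pX_eq_lineDeriv (f : ℝ → ℝ → ℝ → ℝ) (x y t : ℝ) :
    pX f x y t = lineDeriv ℝ ↿f (x, y, t) (1, 0, 0) := by
  simpa [pX, lineDeriv, Function.HasUncurry.uncurry] using
    (deriv_comp_const_add (fun s ↦ f s y t) x 0).symm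

lemma pY_eq_lineDeriv (f : ℝ → ℝ → ℝ → ℝ) (x y t : ℝ) :
    pY f x y t = lineDeriv ℝ ↿f (x, y, t) (0, 1, 0) := by
  simpa [pY, lineDeriv, Function.HasUncurry.uncurry] using
    (deriv_comp_const_add (fun s ↦ f x s t) y 0).symm

lemma pT_eq_lineDeriv (f : ℝ → ℝ → ℝ → ℝ) (x y t : ℝ) :
    pT f x y t = lineDeriv ℝ ↿f (x, y, t) (0, 0, 1) := by
  simpa [pT, lineDeriv, Function.HasUncurry.uncurry] using
    (deriv_comp_const_add (fun s ↦ f x y s) t 0).symm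

lemma contDiffOn_pX (hU : IsOpen U) (hf : ContDiffOn ℝ n ↿f U) (hmn : m + 1 ≤ n) :
    ContDiffOn ℝ m ↿(pX f) U :=
  (contDiffOn_lineDeriv hU hf hmn (1, 0, 0)).congr fun _ _ ↦ pX_eq_lineDeriv f _ _ _

lemma contDiffOn_pY (hU : IsOpen U) (hf : ContDiffOn ℝ n ↿f U) (hmn : m + 1 ≤ n) :
    ContDiffOn ℝ m ↿(pY f) U :=
  (contDiffOn_lineDeriv hU hf hmn (0, 1, 0)).congr fun _ _ ↦ pY_eq_lineDeriv f _ _ _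

lemma contDiffOn_pT (hU : IsOpen U) (hf : ContDiffOn ℝ n ↿f U) (hmn : m + 1 ≤ n) :
    ContDiffOn ℝ m ↿(pT f) U :=
  (contDiffOn_lineDeriv hU hf hmn (0, 0, 1)).congr fun _ _ ↦ pT_eq_lineDeriv f _ _ _

lemma continuousOn_pT_pT (hU : IsOpen U) (hf : ContDiffOn ℝ 2 ↿f U) :
    ContinuousOn ↿(pT (pT f)) U :=
  (contDiffOn_pT (m := 0) hU (contDiffOn_pT (m := 1) hU hf one_add_one_eq_two.le)
    (zero_add 1).le).continuousOn

end PartialDerivatives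

section Multiplier

variable {g l h : ℝ → ℝ → ℝ → ℝ} {U : Set (ℝ × ℝ × ℝ)} {x y t c : ℝ}

lemma eq_integral_and_pX_mul_integral_eq (hU : IsOpen U) (hl : DifferentiableOn ℝ ↿l U)
    (hg : ContinuousOn ↿g U) (hh : DifferentiableOn ℝ ↿h U)
    (hmem : ∀ ξ ∈ [[x, c]], (ξ, y, t) ∈ U)
    (hgl : ∀ ξ ∈ [[x, c]], g ξ y t + pX l ξ y t = 0) (hc : l c y t = 0) :
    l x y t = (∫ ξ in x..c, g ξ y t) ∧
      pX (fun a b s ↦ h a b s * ∫ ξ in a..c, g ξ b s) x y t =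
        pX (fun a b s ↦ l a b s * h a b s) x y t :=
  eq_integral_and_deriv_mul_integral_eq_along (γ := fun ξ ↦ (ξ, y, t)) (by fun_prop)
    hU hl hg hh hmem hgl hc

lemma eq_integral_and_pY_mul_integral_eq (hU : IsOpen U) (hl : DifferentiableOn ℝ ↿l U)
    (hg : ContinuousOn ↿g U) (hh : DifferentiableOn ℝ ↿h U)
    (hmem : ∀ ζ ∈ [[y, c]], (x, ζ, t) ∈ U)
    (hgl : ∀ ζ ∈ [[y, c]], g x ζ t + pY l x ζ t = 0) (hc : l x c t = 0) :
    l x y t = (∫ ζ in y..c, g x ζ t) ∧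
      pY (fun a b s ↦ h a b s * ∫ ζ in b..c, g a ζ s) x y t =
        pY (fun a b s ↦ l a b s * h a b s) x y t :=
  eq_integral_and_deriv_mul_integral_eq_along (γ := fun ζ ↦ (x, ζ, t)) (by fun_prop)
    hU hl hg hh hmem hgl hc

lemma pY_mul_integral_symm (g h : ℝ → ℝ → ℝ → ℝ) (x y t c : ℝ) :
    pY (fun a b s ↦ h a b s * ∫ ζ in c..b, g a ζ s) x y t =
      -pY (fun a b s ↦ h a b s * ∫ ζ in b..c, g a ζ s) x y t := by
  simp only [pY, intervalIntegral.integral_symm _ c, mul_neg, deriv.fun_neg]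

end Multiplier

theorem modelII_reduction_general (Lx Ly D : ℝ) (T : Set ℝ) (u v w l1 l2 : ℝ → ℝ → ℝ → ℝ)
    (U : Set (ℝ × ℝ × ℝ)) (hU : IsOpen U) (hsub : Icc 0 Lx ×ˢ Icc 0 Ly ×ˢ T ⊆ U)
    (hu : ContDiffOn ℝ 2 ↿u U) (hv : ContDiffOn ℝ 2 ↿v U) (hw : ContDiffOn ℝ 4 ↿w U)
    (hl1 : DifferentiableOn ℝ ↿l1 U) (hl2 : DifferentiableOn ℝ ↿l2 U)
    (hueq : ∀ x ∈ Icc 0 Lx, ∀ y ∈ Icc 0 Ly, ∀ t ∈ T, pT (pT u) x y t + pX l1 x y t = 0)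
    (hveq : ∀ x ∈ Icc 0 Lx, ∀ y ∈ Icc 0 Ly, ∀ t ∈ T, pT (pT v) x y t + pY l2 x y t = 0)
    (hweq : ∀ x ∈ Icc 0 Lx, ∀ y ∈ Icc 0 Ly, ∀ t ∈ T,
      pT (pT w) x y t
        + D * (lap (fun a b c ↦ (1 + gradSq w a b c) * lap w a b c) x y t
            - (pX (fun a b c ↦ (lap w a b c) ^ 2 * pX w a b c) x y t
              + pY (fun a b c ↦ (lap w a b c) ^ 2 * pY w a b c) x y t))
        + pX (fun a b c ↦ l1 a b c * pX w a b c) x y t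
        + pY (fun a b c ↦ l2 a b c * pY w a b c) x y t = 0)
    (hbc1 : ∀ y ∈ Icc 0 Ly, ∀ t ∈ T, l1 Lx y t = 0)
    (hbc2 : ∀ x ∈ Icc 0 Lx, ∀ t ∈ T, l2 x 0 t = 0) :
    ∀ x ∈ Icc 0 Lx, ∀ y ∈ Icc 0 Ly, ∀ t ∈ T,
      l1 x y t = (∫ ξ in x..Lx, pT (pT u) ξ y t) ∧
      l2 x y t = -(∫ ζ in (0 : ℝ)..y, pT (pT v) x ζ t) ∧
      pT (pT w) x y t
        + D * lap (fun a b c ↦ (1 + gradSq w a b c) * lap w a b c) x y t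
        - D * (pX (fun a b c ↦ (lap w a b c) ^ 2 * pX w a b c) x y t
            + pY (fun a b c ↦ (lap w a b c) ^ 2 * pY w a b c) x y t)
        + pX (fun a b c ↦ pX w a b c * ∫ ξ in a..Lx, pT (pT u) ξ b c) x y t
        - pY (fun a b c ↦ pY w a b c * ∫ ζ in (0 : ℝ)..b, pT (pT v) a ζ c) x y t
        = 0 := by
  intro x hx y hy t ht
  have hx_sub : [[x, Lx]] ⊆ Icc 0 Lx :=
    uIcc_subset_Icc hx (right_mem_Icc.2 (hx.1.trans hx.2))
  have hy_sub : [[y, 0]] ⊆ Icc 0 Ly :=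
    uIcc_subset_Icc hy (left_mem_Icc.2 (hy.1.trans hy.2))
  have hwx : DifferentiableOn ℝ ↿(pX w) U :=
    (contDiffOn_pX (m := 3) hU hw (by norm_num)).differentiableOn (by norm_num)
  have hwy : DifferentiableOn ℝ ↿(pY w) U :=
    (contDiffOn_pY (m := 3) hU hw (by norm_num)).differentiableOn (by norm_num)
  obtain ⟨hl1_eq, hflux_x⟩ := eq_integral_and_pX_mul_integral_eq hU hl1
    (continuousOn_pT_pT hU hu) hwx (fun ξ hξ ↦ hsub ⟨hx_sub hξ, hy, ht⟩)
    (fun ξ hξ ↦ hueq ξ (hx_sub hξ) y hy t ht) (hbc1 y hy t ht)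
  obtain ⟨hl2_eq, hflux_y⟩ := eq_integral_and_pY_mul_integral_eq hU hl2
    (continuousOn_pT_pT hU hv) hwy (fun ζ hζ ↦ hsub ⟨hx, hy_sub hζ, ht⟩)
    (fun ζ hζ ↦ hveq x hx ζ (hy_sub hζ) t ht) (hbc2 x hx t ht)
  refine ⟨hl1_eq, hl2_eq.trans (intervalIntegral.integral_symm 0 y), ?_⟩
  rw [hflux_x, pY_mul_integral_symm, hflux_y]
  linear_combination hweq x hx y hy t ht

/-- Elimination of the Lagrange multipliers in Model II: if the
Model II system holds with `λ₁ = 0` on `{x = Lx}` and `λ₂ = 0` on `{y = 0}`,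
then `λ₁ = ∫ₓ^{Lx} u_tt`, `λ₂ = −∫₀^y v_tt`, and `w` satisfies the closed
nonlocal quasilinear equation. -/
theorem modelII_reduction
    (Lx Ly D : ℝ) (hLx : 0 < Lx) (hLy : 0 < Ly) (hD : 0 < D)
    (u v w l1 l2 : ℝ → ℝ → ℝ → ℝ)
    (U : Set (ℝ × ℝ × ℝ)) (hU : IsOpen U)
    (hsub : Set.Icc (0 : ℝ) Lx ×ˢ Set.Icc (0 : ℝ) Ly ×ˢ (Set.univ : Set ℝ) ⊆ U)
    (hus : ContDiffOn ℝ (⊤ : ℕ∞) (fun p : ℝ × ℝ × ℝ => u p.1 p.2.1 p.2.2) U)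
    (hvs : ContDiffOn ℝ (⊤ : ℕ∞) (fun p : ℝ × ℝ × ℝ => v p.1 p.2.1 p.2.2) U)
    (hws : ContDiffOn ℝ (⊤ : ℕ∞) (fun p : ℝ × ℝ × ℝ => w p.1 p.2.1 p.2.2) U)
    (hl1s : ContDiffOn ℝ (⊤ : ℕ∞) (fun p : ℝ × ℝ × ℝ => l1 p.1 p.2.1 p.2.2) U)
    (hl2s : ContDiffOn ℝ (⊤ : ℕ∞) (fun p : ℝ × ℝ × ℝ => l2 p.1 p.2.1 p.2.2) U)
    (hueq : ∀ x ∈ Set.Icc (0 : ℝ) Lx, ∀ y ∈ Set.Icc (0 : ℝ) Ly, ∀ t : ℝ,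
      pT (pT u) x y t + pX l1 x y t = 0)
    (hveq : ∀ x ∈ Set.Icc (0 : ℝ) Lx, ∀ y ∈ Set.Icc (0 : ℝ) Ly, ∀ t : ℝ,
      pT (pT v) x y t + pY l2 x y t = 0)
    (hweq : ∀ x ∈ Set.Icc (0 : ℝ) Lx, ∀ y ∈ Set.Icc (0 : ℝ) Ly, ∀ t : ℝ,
      pT (pT w) x y t
        + D * (lap (fun a b c => (1 + gradSq w a b c) * lap w a b c) x y t
            - (pX (fun a b c => (lap w a b c) ^ 2 * pX w a b c) x y t
              + pY (fun a b c => (lap w a b c) ^ 2 * pY w a b c) x y t))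
        + pX (fun a b c => l1 a b c * pX w a b c) x y t
        + pY (fun a b c => l2 a b c * pY w a b c) x y t = 0)
    (hbc1 : ∀ y ∈ Set.Icc (0 : ℝ) Ly, ∀ t : ℝ, l1 Lx y t = 0)
    (hbc2 : ∀ x ∈ Set.Icc (0 : ℝ) Lx, ∀ t : ℝ, l2 x 0 t = 0) :
    ∀ x ∈ Set.Icc (0 : ℝ) Lx, ∀ y ∈ Set.Icc (0 : ℝ) Ly, ∀ t : ℝ,
      l1 x y t = (∫ ξ in x..Lx, pT (pT u) ξ y t) ∧
      l2 x y t = -(∫ ζ in (0 : ℝ)..y, pT (pT v) x ζ t) ∧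
      pT (pT w) x y t
        + D * lap (fun a b c => (1 + gradSq w a b c) * lap w a b c) x y t
        - D * (pX (fun a b c => (lap w a b c) ^ 2 * pX w a b c) x y t
            + pY (fun a b c => (lap w a b c) ^ 2 * pY w a b c) x y t)
        + pX (fun a b c => pX w a b c * ∫ ξ in a..Lx, pT (pT u) ξ b c) x y t
        - pY (fun a b c => pY w a b c * ∫ ζ in (0 : ℝ)..b, pT (pT v) a ζ c) x y t
        = 0 := by
  simpa only [mem_univ, forall_const] using modelII_reduction_general Lx Ly D univ u v w l1 l2 U
    hU hsub (contDiffOn_infty.1 hus 2) (contDiffOn_infty.1 hvs 2) (contDiffOn_infty.1 hws 4)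
    (hl1s.differentiableOn (by simp)) (hl2s.differentiableOn (by simp))
    (fun x hx y hy t _ ↦ hueq x hx y hy t) (fun x hx y hy t _ ↦ hveq x hx y hy t)
    (fun x hx y hy t _ ↦ hweq x hx y hy t) (fun y hy t _ ↦ hbc1 y hy t)
    (fun x hx t _ ↦ hbc2 x hx t)
end
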